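/- Let a be a positive integer, c ∈ (0, 1/3] and d ∈ (0, 1]. Let 𝒢 be a class of graphs closed under taking subgraphs such that every graph in 𝒢 that has a Hamiltonian path and order n has an induced path of order at least c·(log₂ n)^d. If a graph G in TR(𝒢, a) has a Hamiltonian path and order n, then G has an induced path of order at least c·(log₂ n)^(1/(4a + 1/d)). -/

import Mathlib

open SimpleGraph Real

/-- `G` has a (not necessarily induced) path on `n` vertices. -/
def HasPathOfOrder {V : Type*} (G : SimpleGraph V) (n : ℕ) : Prop :=
  ∃ (u v : V) (p : G.Walk u v), p.IsPath ∧ p.length + 1 = n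

/-- `G` has a Hamiltonian path. -/
def HasHamPath {V : Type*} (G : SimpleGraph V) : Prop :=
  ∃ (u v : V) (p : G.Walk u v), p.IsPath ∧ ∀ w, w ∈ p.support

/-- `G` has an induced path on at least `r` vertices (an induced subgraph isomorphic to a
path graph on `m ≥ r` vertices). -/
def HasInducedPathGE {V : Type*} (G : SimpleGraph V) (r : ℝ) : Prop :=
  ∃ m : ℕ, r ≤ (m : ℝ) ∧ Nonempty (pathGraph m ↪g G)

/-- A tree (or path) representation of `G` over the graph `T`: every vertex `v` of `G` has a
nonempty connected model `model v ⊆ V(T)`, and models of adjacent vertices intersect. -/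
structure TreeRep {V N : Type*} (G : SimpleGraph V) (T : SimpleGraph N) where
  model : V → Set N
  model_connected : ∀ v, (T.induce (model v)).Connected
  adj_meet : ∀ ⦃u v⦄, G.Adj u v → (model u ∩ model v).Nonempty

namespace TreeRep

variable {V N : Type*} {G : SimpleGraph V} {T : SimpleGraph N}

/-- The bag of the representation at a node `t`. -/
def bag (R : TreeRep G T) (t : N) : Set V := {v | t ∈ R.model v}

/-- The representation has width less than `k`, i.e. all bags have at most `k` vertices. -/
def WidthLT (R : TreeRep G T) (k : ℕ) : Prop := ∀ t, (R.bag t).ncard ≤ k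

/-- The representation has width at most `k`, i.e. all bags have at most `k + 1` vertices. -/
def WidthLE (R : TreeRep G T) (k : ℕ) : Prop := ∀ t, (R.bag t).ncard ≤ k + 1

/-- The weight of a path `p` of `T`: the number of vertices of `G` whose model meets `p`. -/
noncomputable def pathWeight (R : TreeRep G T) {x y : N} (p : T.Walk x y) : ℕ :=
  {v : V | ∃ t ∈ p.support, t ∈ R.model v}.ncard

/-- A representation is varied if no bag is contained in the bag at a neighboring node. -/
def Varied (R : TreeRep G T) : Prop := ∀ ⦃t t'⦄, T.Adj t t' → ¬ R.bag t ⊆ R.bag t'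

/-- The representation has adhesion less than `a`: the adhesion set of every edge of `T`
has fewer than `a` vertices. -/
def AdhesionLT (R : TreeRep G T) (a : ℕ) : Prop :=
  ∀ ⦃t t'⦄, T.Adj t t' → (R.bag t ∩ R.bag t').ncard < a

/-- The torso of the representation at a node `t`: the subgraph induced on the bag at `t`
together with all edges inside adhesion sets of edges of `T` incident to `t`. -/
def torso (R : TreeRep G T) (t : N) : SimpleGraph (R.bag t) :=
  SimpleGraph.fromRel (fun u v =>
    G.Adj u v ∨ ∃ t', T.Adj t t' ∧ (u : V) ∈ R.bag t' ∧ (v : V) ∈ R.bag t')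

end TreeRep

/-- `G` has pathwidth less than `k`: it has a representation over a path all of whose bags
have at most `k` vertices. -/
def PathwidthLT {V : Type*} (G : SimpleGraph V) (k : ℕ) : Prop :=
  ∃ (m : ℕ) (R : TreeRep G (pathGraph (m + 1))), R.WidthLT k

/-- `G` has treewidth less than `k`: it has a representation over a tree all of whose bags
have at most `k` vertices. -/
def TreewidthLT {V : Type*} (G : SimpleGraph V) (k : ℕ) : Prop :=
  ∃ (N : Type) (_ : Fintype N) (T : SimpleGraph N), T.IsTree ∧
    ∃ R : TreeRep G T, R.WidthLT k

/-- `G` has treewidth at most `k`. -/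
def TreewidthLE {V : Type*} (G : SimpleGraph V) (k : ℕ) : Prop :=
  ∃ (N : Type) (_ : Fintype N) (T : SimpleGraph N), T.IsTree ∧
    ∃ R : TreeRep G T, R.WidthLE k

/-- A leaf of a graph: a vertex with at most one neighbor. -/
def IsLeafNode {N : Type*} (T : SimpleGraph N) (l : N) : Prop :=
  (T.neighborSet l).Subsingleton

/-- `H` is obtained from `G` by a sequence of edge contractions: there is a surjection
from `V(G)` onto `V(H)` with connected fibers inducing the adjacency of `H`. -/
def IsContraction {W V : Type*} (H : SimpleGraph W) (G : SimpleGraph V) : Prop :=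
  ∃ f : V → W, Function.Surjective f ∧
    (∀ w : W, (G.induce (f ⁻¹' {w})).Connected) ∧
    (∀ x y : W, H.Adj x y ↔ x ≠ y ∧ ∃ u v : V, f u = x ∧ f v = y ∧ G.Adj u v)

/-- `G` is an interval graph: the intersection graph of a family of real intervals. -/
def IsIntervalGraph {V : Type*} (G : SimpleGraph V) : Prop :=
  ∃ l r : V → ℝ, (∀ v, l v ≤ r v) ∧
    ∀ u v : V, G.Adj u v ↔ u ≠ v ∧ max (l u) (l v) ≤ min (r u) (r v)

/-- The internal vertices of a walk: vertices of the walk distinct from its two endpoints. -/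
def WalkInternal {V : Type*} {G : SimpleGraph V} {x y : V} (p : G.Walk x y) : Set V :=
  {w | w ∈ p.support ∧ w ≠ x ∧ w ≠ y}

/-- `H` is a topological minor of `G`: there are branch vertices `φ u` for `u ∈ V(H)` and
internally disjoint paths of `G` joining them, one for each edge of `H`. -/
def IsTopMinor {W V : Type*} (H : SimpleGraph W) (G : SimpleGraph V) : Prop :=
  ∃ (φ : W ↪ V) (P : ∀ ⦃u v : W⦄, H.Adj u v → G.Walk (φ u) (φ v)),
    (∀ ⦃u v⦄ (h : H.Adj u v), (P h).IsPath) ∧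
    (∀ ⦃u v⦄ (h : H.Adj u v), P h.symm = (P h).reverse) ∧
    (∀ ⦃u v⦄ (h : H.Adj u v), ∀ w ∈ WalkInternal (P h), w ∉ Set.range φ) ∧
    (∀ ⦃u v u' v'⦄ (h : H.Adj u v) (h' : H.Adj u' v'), s(u, v) ≠ s(u', v') →
      ∀ w ∈ WalkInternal (P h), w ∉ WalkInternal (P h'))

/-- `H` is (an isomorphic copy of) a subgraph of `G`. -/
def ContainsSubgraphCopy {A B : Type*} (H : SimpleGraph A) (G : SimpleGraph B) : Prop :=
  ∃ f : A ↪ B, ∀ u v : A, H.Adj u v → G.Adj (f u) (f v)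

/-- `G` is `k`-degenerate: every (induced) subgraph has a vertex of degree at most `k`. -/
def Degenerate {V : Type*} (G : SimpleGraph V) (k : ℕ) : Prop :=
  ∀ s : Set V, s.Nonempty → ∃ v ∈ s, {w | w ∈ s ∧ G.Adj v w}.ncard ≤ k

/-- The cycle on `ZMod m` (for `m ≥ 3` this is the cycle graph on `m` vertices). -/
def ringGraph (m : ℕ) : SimpleGraph (ZMod m) :=
  SimpleGraph.fromRel (fun i j => j = i + 1)

/-- Cliquewidth expressions with labels in `Fin k`. -/
inductive CWExpr (k : ℕ) where
  | vertex (l : Fin k) : CWExpr k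
  | union (e₁ e₂ : CWExpr k) : CWExpr k
  | addEdges (i j : Fin k) (hij : i ≠ j) (e : CWExpr k) : CWExpr k
  | relabel (f : Fin k → Fin k) (e : CWExpr k) : CWExpr k

namespace CWExpr

variable {k : ℕ}

/-- The vertex set of the graph described by a cliquewidth expression. -/
def verts : CWExpr k → Type
  | vertex _ => Unit
  | union e₁ e₂ => e₁.verts ⊕ e₂.verts
  | addEdges _ _ _ e => e.verts
  | relabel _ e => e.verts

/-- The labelling of the vertices described by a cliquewidth expression. -/
def label : (e : CWExpr k) → e.verts → Fin k
  | vertex l, _ => l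
  | union e₁ _, Sum.inl x => e₁.label x
  | union _ e₂, Sum.inr x => e₂.label x
  | addEdges _ _ _ e, x => e.label x
  | relabel f e, x => f (e.label x)

/-- The adjacency relation described by a cliquewidth expression. -/
def adj : (e : CWExpr k) → e.verts → e.verts → Prop
  | vertex _, _, _ => False
  | union e₁ _, Sum.inl x, Sum.inl y => e₁.adj x y
  | union _ e₂, Sum.inr x, Sum.inr y => e₂.adj x y
  | union _ _, _, _ => False
  | addEdges i j _ e, x, y =>
      e.adj x y ∨ (e.label x = i ∧ e.label y = j) ∨ (e.label x = j ∧ e.label y = i)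
  | relabel _ e, x, y => e.adj x y

/-- The graph described by a cliquewidth expression. -/
def graph (e : CWExpr k) : SimpleGraph e.verts := SimpleGraph.fromRel e.adj

end CWExpr

/-- `G` has cliquewidth at most `k`: it is isomorphic to the graph of a cliquewidth
expression with at most `k` labels. -/
def CliquewidthLE {V : Type*} (G : SimpleGraph V) (k : ℕ) : Prop :=
  ∃ e : CWExpr k, Nonempty (G ≃g e.graph)

/-- `G` has `(k, Δ)`-almost bounded degree: removing at most `k` vertices yields a graph of
maximum degree at most `Δ`. -/
def AlmostBoundedDegree {V : Type*} (G : SimpleGraph V) (k Δ : ℕ) : Prop :=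
  ∃ X : Set V, X.ncard ≤ k ∧ ∀ v ∉ X, {w | w ∉ X ∧ G.Adj v w}.ncard ≤ Δ

/-- An embedding scheme for `H`: a rotation system (a permutation of the darts that is,
around each vertex, a single cycle on the darts leaving that vertex) together with a
signature on the edges. -/
structure EmbScheme {W : Type*} (H : SimpleGraph W) where
  rot : Equiv.Perm H.Dart
  rot_fst : ∀ d : H.Dart, (rot d).fst = d.fst
  rot_cyclic : ∀ d d' : H.Dart, d.fst = d'.fst → ∃ n : ℕ, (rot ^ n) d = d'
  sign : Sym2 W → Bool

namespace EmbScheme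

variable {W : Type*} {H : SimpleGraph W}

/-- The face-tracing step of an embedding scheme, acting on darts with a direction. -/
def faceStep (S : EmbScheme H) : H.Dart × Bool → H.Dart × Bool :=
  fun p =>
    let s' := xor p.2 (S.sign p.1.edge)
    ((if s' then S.rot.symm p.1.symm else S.rot p.1.symm), s')

/-- The number of orbits of a function. -/
noncomputable def orbitCount {α : Type*} (f : α → α) : ℕ :=
  Nat.card (Quotient (Relation.EqvGen.setoid (fun x y => f x = y)))

/-- The scheme describes an embedding of `H` in a surface of Euler genus at most `g`.
Isolated vertices each bound one face; every other face is traced twice by `faceStep`,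
so the number of faces is `orbitCount (faceStep) / 2` plus the number of isolated
vertices, and the Euler genus of the embedding is `2c - |V| + |E| - F`. -/
def GenusLE (S : EmbScheme H) (g : ℕ) : Prop :=
  2 * Nat.card H.ConnectedComponent + Nat.card H.edgeSet ≤
    g + Nat.card W +
      (orbitCount S.faceStep / 2 + Nat.card {v : W | ∀ w, ¬ H.Adj v w})

/-- The cycle `e 0, e 1, …, e (m-1)` is a facial cycle of the embedding scheme `S`:
its consecutive darts are consecutive in a face traversal. -/
def IsFacialCycle (S : EmbScheme H) {m : ℕ} (e : ZMod m → W)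
    (hadj : ∀ x : ZMod m, H.Adj (e x) (e (x + 1))) : Prop :=
  ∃ b : ZMod m → Bool, ∀ x : ZMod m,
    S.faceStep (⟨(e x, e (x + 1)), hadj x⟩, b x) =
      (⟨(e (x + 1), e (x + 1 + 1)), hadj (x + 1)⟩, b (x + 1))

end EmbScheme

/-- `Hs` has a `C`-vortex of width less than `k`, where `C` is the cycle of `G₀` given by
`e`: the vertices common to `Hs` and `G₀` are exactly those of `C`, and `Hs` has a cycle
representation over `C` in which the model of each vertex of `C` contains that vertex and
every bag has at most `k` vertices. -/
def IsVortex {V : Type*} {G : SimpleGraph V} (Hs G₀ : G.Subgraph) {m : ℕ}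
    (e : ZMod m → G₀.verts) (k : ℕ) : Prop :=
  Hs.verts ∩ G₀.verts = Subtype.val '' Set.range e ∧
  ∃ model : Hs.verts → Set (ZMod m),
    (∀ v, ((ringGraph m).induce (model v)).Connected) ∧
    (∀ (x : ZMod m) (v : Hs.verts), (e x : V) = (v : V) → x ∈ model v) ∧
    (∀ ⦃u v⦄, Hs.coe.Adj u v → (model u ∩ model v).Nonempty) ∧
    (∀ t : ZMod m, {v : Hs.verts | t ∈ model v}.ncard ≤ k)

/-- `G` is `(g, p, a, k)`-almost-embeddable. -/
def AlmostEmbeddable {V : Type*} (G : SimpleGraph V) (g p a k : ℕ) : Prop :=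
  ∃ A : Set V, A.ncard ≤ a ∧
  ∃ s : ℕ, s ≤ p ∧
  ∃ (G₀ : G.Subgraph) (Gv : Fin s → G.Subgraph),
    (G₀ ⊔ ⨆ i, Gv i) = (⊤ : G.Subgraph).deleteVerts A ∧
    (∀ i j, i ≠ j → Disjoint (Gv i).verts (Gv j).verts) ∧
    ∃ S : EmbScheme G₀.coe, S.GenusLE g ∧
    ∃ (m : Fin s → ℕ) (e : ∀ i, ZMod (m i) → G₀.verts)
      (hadj : ∀ i x, G₀.coe.Adj (e i x) (e i (x + 1))),
      (∀ i, 3 ≤ m i) ∧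
      (∀ i, Function.Injective (e i)) ∧
      (∀ i, S.IsFacialCycle (e i) (hadj i)) ∧
      (∀ i j, i ≠ j → Disjoint (Set.range (e i)) (Set.range (e j))) ∧
      (∀ i, IsVortex (Gv i) G₀ (e i) k)

/-- A geodesic is an induced path. -/
lemma geod_embedding {V : Type*} (G : SimpleGraph V) {u v : V} (p : G.Walk u v)
    (hp : p.length = G.dist u v) : Nonempty (pathGraph (p.length + 1) ↪g G) := by
  have hd : ∀ i ≤ p.length, G.dist u (p.getVert i) = i := by
    intro i hi
    have h1 : G.dist u (p.getVert i) ≤ i := by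
      have := SimpleGraph.dist_le (p.take i)
      rw [Walk.take_length] at this
      omega
    have h2 : G.dist (p.getVert i) v ≤ p.length - i := by
      have := SimpleGraph.dist_le (p.drop i)
      rwa [Walk.drop_length] at this
    have h3 : p.length ≤ G.dist u (p.getVert i) + G.dist (p.getVert i) v := by
      by_contra hcon
      obtain ⟨w1, hw1⟩ := (p.take i).reachable.exists_walk_length_eq_dist
      obtain ⟨w2, hw2⟩ := (p.drop i).reachable.exists_walk_length_eq_dist
      have := SimpleGraph.dist_le (w1.append w2)
      rw [Walk.length_append] at this
      omega
    omega
  have hstep : ∀ i j : ℕ, i ≤ p.length → j ≤ p.length → G.Adj (p.getVert i) (p.getVert j) →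
      j ≤ i + 1 := by
    intro i j hi hj hadj
    obtain ⟨w1, hw1⟩ := (p.take i).reachable.exists_walk_length_eq_dist
    have := SimpleGraph.dist_le (w1.concat hadj)
    rw [Walk.length_concat, hw1, hd i hi, hd j hj] at this
    exact this
  refine ⟨⟨⟨fun i => p.getVert i.val, ?_⟩, ?_⟩⟩
  · intro i j hij
    have h1 := hd i.val (by omega)
    have h2 := hd j.val (by omega)
    simp only at hij
    rw [hij] at h1
    ext; omega
  · intro i j
    rw [pathGraph_adj]
    change G.Adj (p.getVert i.val) (p.getVert j.val) ↔ _
    constructor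
    · intro h
      have h1 := hstep i j (by omega) (by omega) h
      have h2 := hstep j i (by omega) (by omega) h.symm
      have h3 : i.val ≠ j.val := by
        intro h4
        rw [h4] at h
        exact G.loopless.irrefl _ h
      omega
    · rintro (h | h)
      · rw [← h]; exact p.adj_getVert_succ (by omega)
      · rw [← h]; exact (p.adj_getVert_succ (by omega)).symm

/-- The subgraph of edges outside of `β`. -/
def outGraph {V : Type*} (G : SimpleGraph V) (β : Set V) : SimpleGraph V where
  Adj x y := G.Adj x y ∧ x ∉ β ∧ y ∉ β
  symm := ⟨fun _ _ h => ⟨h.1.symm, h.2.2, h.2.1⟩⟩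
  loopless := ⟨fun _ h => G.loopless.irrefl _ h.1⟩

/-- Adjacent, or connected through the outside of `β`. -/
def thruGraph {V : Type*} (G : SimpleGraph V) (β : Set V) : SimpleGraph V where
  Adj u v := u ≠ v ∧ (G.Adj u v ∨ ∃ x y, x ∉ β ∧ y ∉ β ∧ G.Adj u x ∧
    (outGraph G β).Reachable x y ∧ G.Adj y v)
  symm := ⟨by
    rintro u v ⟨h, h' | ⟨x, y, hx, hy, h1, h2, h3⟩⟩
    · exact ⟨h.symm, Or.inl h'.symm⟩
    · exact ⟨h.symm, Or.inr ⟨y, x, hy, hx, h3.symm, h2.symm, h1.symm⟩⟩⟩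
  loopless := ⟨fun _ h => h.1 rfl⟩

/-- An induced path of the `thruGraph` on `β` gives an at least as long one in `G`. -/
lemma thru_path {V : Type*} (G : SimpleGraph V) (β : Set V) (m : ℕ)
    (f : pathGraph m ↪g (thruGraph G β).induce β) :
    ∃ m' ≥ m, Nonempty (pathGraph m' ↪g G) := by
  rcases m with _ | k
  · exact ⟨0, le_refl _, ⟨⟨⟨fun i => i.elim0, fun i => i.elim0⟩, fun {i} => i.elim0⟩⟩⟩
  set q : Fin (k + 1) → V := fun i => (f i : V) with hq
  have hqβ : ∀ i, q i ∈ β := fun i => (f i).2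
  have hqH : ∀ i j, (thruGraph G β).Adj (q i) (q j) ↔ (i.val + 1 = j.val ∨ j.val + 1 = i.val) := by
    intro i j
    rw [← pathGraph_adj, ← f.map_rel_iff]
    rfl
  have hqinj : ∀ i j, q i = q j → i = j := by
    intro i j h
    exact f.injective (Subtype.ext h)
  set W : Set V := {x | x ∉ β ∨ ∃ i, x = q i} with hW
  have hqW : ∀ i, q i ∈ W := fun i => Or.inr ⟨i, rfl⟩
  set Tc : V → Fin (k + 1) → Prop := fun x i => x = q i ∨ (x ∉ β ∧ ∃ y, y ∉ β ∧
    (outGraph G β).Reachable x y ∧ G.Adj y (q i)) with hTc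
  have key : ∀ x y i j, G.Adj x y → Tc x i → Tc y j → j.val ≤ i.val + 1 := by
    intro x y i j hxy hx hy
    have : q i ≠ q j → (thruGraph G β).Adj (q i) (q j) := by
      intro hne
      refine ⟨hne, ?_⟩
      rcases hx with hx | ⟨hx, z, hz, hxz, hzi⟩ <;> rcases hy with hy | ⟨hy, z', hz', hyz, hzj⟩
      · left; rw [← hx, ← hy]; exact hxy
      · right; exact ⟨y, z', hy, hz', hx ▸ hxy, hyz, hzj⟩
      · right; exact ⟨z, x, hz, hx, hzi.symm, hxz.symm, hy ▸ hxy⟩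
      · right
        refine ⟨z, z', hz, hz', hzi.symm, ?_, hzj⟩
        have : (outGraph G β).Adj x y := ⟨hxy, hx, hy⟩
        exact hxz.symm.trans (this.reachable.trans hyz)
    by_cases h : q i = q j
    · have := hqinj _ _ h
      omega
    · have := (hqH i j).1 (this h)
      omega
  have key2 : ∀ x y i, G.Adj x y → y ∈ W → Tc x i → ∃ j, Tc y j := by
    intro x y i hxy hy hx
    rcases hy with hy | ⟨j, hj⟩
    · refine ⟨i, Or.inr ⟨hy, ?_⟩⟩
      rcases hx with hx | ⟨hx, z, hz, hxz, hzi⟩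
      · exact ⟨y, hy, Reachable.refl _, hx ▸ hxy.symm⟩
      · have : (outGraph G β).Adj y x := ⟨hxy.symm, hy, hx⟩
        exact ⟨z, hz, this.reachable.trans hxz, hzi⟩
    · exact ⟨j, Or.inl hj⟩
  -- every walk from `q 0` climbs at most one index per step
  have climb : ∀ (a b : W) (p : (G.induce W).Walk a b), ∀ i, Tc a i →
      ∃ j, Tc b j ∧ j.val ≤ i.val + p.length := by
    intro a b p
    induction p with
    | nil => exact fun i hi => ⟨i, hi, by omega⟩
    | @cons a a' b h p ih =>
      intro i hi
      have hadj : G.Adj a a' := h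
      obtain ⟨j, hj⟩ := key2 _ _ _ hadj a'.2 hi
      have := key _ _ _ _ hadj hi hj
      obtain ⟨j', hj', hle⟩ := ih j hj
      refine ⟨j', hj', ?_⟩
      rw [Walk.length_cons]
      omega
  have outReach : ∀ x y, (outGraph G β).Reachable x y → ∀ (hx : x ∉ β) (hy : y ∉ β),
      (G.induce W).Reachable ⟨x, Or.inl hx⟩ ⟨y, Or.inl hy⟩ := by
    rintro x y ⟨p⟩
    induction p with
    | nil => exact fun hx hy => Reachable.refl _
    | @cons a a' b h p ih =>
      intro hx hy
      have hadj : (G.induce W).Adj ⟨a, Or.inl hx⟩ ⟨a', Or.inl h.2.2⟩ := h.1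
      exact hadj.reachable.trans (ih h.2.2 hy)
  have reach : ∀ i (hi : i < k + 1), (G.induce W).Reachable ⟨q 0, hqW 0⟩ ⟨q ⟨i, hi⟩, hqW _⟩ := by
    intro i
    induction i with
    | zero => exact fun _ => Reachable.refl _
    | succ i ih =>
      intro hi
      refine (ih (by omega)).trans ?_
      obtain ⟨-, h | ⟨x, y, hx, hy, h1, h2, h3⟩⟩ :=
        (hqH ⟨i, by omega⟩ ⟨i + 1, hi⟩).2 (Or.inl rfl)
      · exact Adj.reachable h
      · have e1 : (G.induce W).Adj ⟨q ⟨i, by omega⟩, hqW _⟩ ⟨x, Or.inl hx⟩ := h1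
        have e2 : (G.induce W).Adj ⟨y, Or.inl hy⟩ ⟨q ⟨i + 1, hi⟩, hqW _⟩ := h3
        exact e1.reachable.trans ((outReach x y h2 hx hy).trans e2.reachable)
  obtain ⟨p, hp⟩ := (reach k (by omega)).exists_walk_length_eq_dist
  obtain ⟨e⟩ := geod_embedding _ p hp
  refine ⟨p.length + 1, ?_, ⟨e.trans (Embedding.induce W)⟩⟩
  obtain ⟨j, hj, hle⟩ := climb _ _ p 0 (Or.inl rfl)
  rcases hj with hj | ⟨hj, -⟩
  · have := hqinj _ _ hj
    rw [← this] at hle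
    simp at hle
    omega
  · exact absurd (hqβ _) hj

/-- Connected in `T` by a walk avoiding `t`. -/
def AvoidReach {N : Type*} (T : SimpleGraph N) (t x y : N) : Prop :=
  ∃ w : T.Walk x y, t ∉ w.support

lemma AvoidReach.trans' {N : Type*} {T : SimpleGraph N} {t x y z : N}
    (h : AvoidReach T t x y) (h' : AvoidReach T t y z) : AvoidReach T t x z := by
  obtain ⟨w, hw⟩ := h
  obtain ⟨w', hw'⟩ := h'
  refine ⟨w.append w', ?_⟩
  rw [Walk.mem_support_append_iff]
  tauto

lemma AvoidReach.symm' {N : Type*} {T : SimpleGraph N} {t x y : N}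
    (h : AvoidReach T t x y) : AvoidReach T t y x := by
  obtain ⟨w, hw⟩ := h
  refine ⟨w.reverse, ?_⟩
  simpa using hw

lemma walk_in_model {N : Type*} {T : SimpleGraph N} {M : Set N} (hM : (T.induce M).Connected)
    {x y : N} (hx : x ∈ M) (hy : y ∈ M) : ∃ w : T.Walk x y, w.IsPath ∧ ∀ z ∈ w.support, z ∈ M := by
  classical
  obtain ⟨w⟩ := hM.preconnected ⟨x, hx⟩ ⟨y, hy⟩
  let w' : T.Walk x y := w.map (Embedding.induce M).toHom
  have h : ∀ z ∈ w'.support, z ∈ M := by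
    intro z hz
    change z ∈ (w.map (Embedding.induce M).toHom).support at hz
    rw [Walk.support_map] at hz
    obtain ⟨z', -, rfl⟩ := List.mem_map.1 hz
    exact z'.2
  exact ⟨w'.bypass, w'.bypass_isPath, fun z hz => h z (w'.support_bypass_subset_support hz)⟩

lemma avoid_model {N : Type*} {T : SimpleGraph N} {M : Set N} (hM : (T.induce M).Connected)
    {t x y : N} (ht : t ∉ M) (hx : x ∈ M) (hy : y ∈ M) : AvoidReach T t x y := by
  obtain ⟨w, -, hw⟩ := walk_in_model hM hx hy
  exact ⟨w, fun h => ht (hw _ h)⟩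

lemma first_step {N : Type*} {T : SimpleGraph N} {M : Set N} (hM : (T.induce M).Connected)
    {t z : N} (ht : t ∈ M) (hz : z ∈ M) (hne : z ≠ t) :
    ∃ t', T.Adj t t' ∧ t' ∈ M ∧ AvoidReach T t t' z := by
  obtain ⟨w, hp, hw⟩ := walk_in_model hM ht hz
  cases w with
  | nil => exact absurd rfl hne
  | @cons _ t' _ h p =>
    rw [Walk.cons_isPath_iff] at hp
    refine ⟨t', h, hw _ ?_, p, hp.2⟩
    simp

lemma avoid_unique {N : Type*} {T : SimpleGraph N} (hT : T.IsAcyclic) {t t' t'' : N}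
    (h' : T.Adj t t') (h'' : T.Adj t t'') (h : AvoidReach T t t' t'') : t' = t'' := by
  classical
  obtain ⟨w, hw⟩ := h
  have hp : (Walk.cons h' w.bypass).IsPath := by
    rw [Walk.cons_isPath_iff]
    exact ⟨w.bypass_isPath, fun h => hw (w.support_bypass_subset_support h)⟩
  have hq : (Walk.cons h'' Walk.nil).IsPath := by
    rw [Walk.cons_isPath_iff]
    simp [h''.ne]
  have := (hT.subsingleton_path _ _).elim ⟨_, hp⟩ ⟨_, hq⟩
  have h2 := congrArg (fun p => p.1.length) this
  simp only [Walk.length_cons, Walk.length_nil] at h2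
  exact Walk.eq_of_length_eq_zero (p := w.bypass) (by omega)

lemma avoid_out {V N : Type*} {G : SimpleGraph V} {T : SimpleGraph N} (R : TreeRep G T) (t : N)
    {x y : V} (h : (outGraph G (R.bag t)).Reachable x y) (hx : x ∉ R.bag t) :
    ∀ a ∈ R.model x, ∀ b ∈ R.model y, AvoidReach T t a b := by
  obtain ⟨p⟩ := h
  induction p with
  | nil =>
    intro a ha b hb
    exact avoid_model (R.model_connected _) hx ha hb
  | @cons x x' y h p ih =>
    intro a ha b hb
    obtain ⟨m, hm, hm'⟩ := R.adj_meet h.1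
    exact (avoid_model (R.model_connected _) hx ha hm).trans' (ih h.2.2 m hm' b hb)

lemma thru_le_torso {V N : Type*} {G : SimpleGraph V} {T : SimpleGraph N} (hT : T.IsAcyclic)
    (R : TreeRep G T) (t : N) (u v : R.bag t)
    (h : ((thruGraph G (R.bag t)).induce (R.bag t)).Adj u v) : (R.torso t).Adj u v := by
  obtain ⟨hne, h⟩ : (thruGraph G (R.bag t)).Adj (u : V) v := h
  unfold TreeRep.torso
  rw [SimpleGraph.fromRel_adj]
  refine ⟨fun h => hne (congrArg _ h), Or.inl ?_⟩
  rcases h with h | ⟨x, y, hx, hy, h1, h2, h3⟩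
  · exact Or.inl h
  · right
    obtain ⟨z, hzu, hzx⟩ := R.adj_meet h1
    obtain ⟨z', hzy, hzv⟩ := R.adj_meet h3
    obtain ⟨t', ht', htu, ha⟩ := first_step (R.model_connected u) u.2 hzu
      (by rintro rfl; exact hx hzx)
    obtain ⟨t'', ht'', htv, ha'⟩ := first_step (R.model_connected v) v.2 hzv
      (by rintro rfl; exact hy hzy)
    have := avoid_unique hT ht' ht'' (ha.trans' ((avoid_out R t h2 hx z hzx z' hzy).trans' ha'.symm'))
    subst this
    exact ⟨t', ht', htu, htv⟩

lemma walk_of_chain {V : Type*} (H : SimpleGraph V) (β : Set V) (l : List V) :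
    ∀ x, (x :: l).IsChain H.Adj → (∀ y ∈ x :: l, y ∈ β) → ∀ hx : x ∈ β,
    ∃ (v : β) (p : (H.induce β).Walk ⟨x, hx⟩ v), p.support.map Subtype.val = x :: l := by
  induction l with
  | nil => exact fun x _ _ hx => ⟨_, Walk.nil, by simp⟩
  | cons y l ih =>
    intro x hc hβ hx
    rw [List.isChain_cons_cons] at hc
    obtain ⟨v, p, hp⟩ := ih y hc.2 (fun z hz => hβ z (List.mem_cons_of_mem _ hz)) (hβ y (by simp))
    have hadj : (H.induce β).Adj ⟨x, hx⟩ ⟨y, hβ y (by simp)⟩ := hc.1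
    exact ⟨v, Walk.cons hadj p, by simp [hp]⟩

open Classical in
lemma filter_chain {V : Type*} (G : SimpleGraph V) (β : Set V) (l : List V) :
    (∀ u, u ∈ β → (u :: l).IsChain G.Adj → (u :: l).Nodup →
      (u :: l.filter (· ∈ β)).IsChain (thruGraph G β).Adj) ∧
    (∀ u x0 x, u ∈ β → x0 ∉ β → x ∉ β → G.Adj u x0 → (outGraph G β).Reachable x0 x →
      (x :: l).IsChain G.Adj → (u :: l).Nodup →
      (u :: l.filter (· ∈ β)).IsChain (thruGraph G β).Adj) := by
  induction l with
  | nil => simp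
  | cons y l ih =>
    constructor
    · intro u hu hc hn
      rw [List.isChain_cons_cons] at hc
      by_cases hy : y ∈ β
      · rw [List.filter_cons_of_pos (by simpa using hy), List.isChain_cons_cons]
        refine ⟨⟨?_, Or.inl hc.1⟩, ih.1 y hy hc.2 hn.of_cons⟩
        exact hc.1.ne
      · rw [List.filter_cons_of_neg (by simpa using hy)]
        exact ih.2 u y y hu hy hy hc.1 (Reachable.refl _) hc.2
          (by simp only [List.nodup_cons, List.mem_cons] at hn ⊢; tauto)
    · intro u x0 x hu hx0 hx hux hr hc hn
      rw [List.isChain_cons_cons] at hc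
      by_cases hy : y ∈ β
      · rw [List.filter_cons_of_pos (by simpa using hy), List.isChain_cons_cons]
        refine ⟨⟨?_, Or.inr ⟨x0, x, hx0, hx, hux, hr, hc.1⟩⟩, ih.1 y hy hc.2 hn.of_cons⟩
        rintro rfl
        simp at hn
      · rw [List.filter_cons_of_neg (by simpa using hy)]
        have : (outGraph G β).Adj x y := ⟨hc.1, hx, hy⟩
        exact ih.2 u x0 y hu hx0 hy hux (hr.trans this.reachable) hc.2
          (by simp only [List.nodup_cons, List.mem_cons] at hn ⊢; tauto)

open Classical in
lemma filter_chain' {V : Type*} (G : SimpleGraph V) (β : Set V) (l : List V)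
    (hc : l.IsChain G.Adj) (hn : l.Nodup) :
    (l.filter (· ∈ β)).IsChain (thruGraph G β).Adj := by
  induction l with
  | nil => simp
  | cons y l ih =>
    by_cases hy : y ∈ β
    · rw [List.filter_cons_of_pos (by simpa using hy)]
      exact (filter_chain G β l).1 y hy hc hn
    · rw [List.filter_cons_of_neg (by simpa using hy)]
      exact ih hc.of_cons hn.of_cons

lemma thru_ham {V : Type*} (G : SimpleGraph V) (β : Set V) (hβ : β.Nonempty)
    (hG : HasHamPath G) : HasHamPath ((thruGraph G β).induce β) := by
  classical
  obtain ⟨u, v, p, hp, hall⟩ := hG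
  have hc := filter_chain' G β p.support p.isChain_adj_support hp.support_nodup
  have hn : (p.support.filter (· ∈ β)).Nodup := hp.support_nodup.filter _
  have hmem : ∀ y, y ∈ p.support.filter (· ∈ β) ↔ y ∈ β := by
    intro y; simp [hall]
  generalize p.support.filter (· ∈ β) = l at hc hn hmem
  cases l with
  | nil =>
    obtain ⟨y, hy⟩ := hβ
    have := (hmem y).2 hy
    simp at this
  | cons x l =>
    obtain ⟨w, q, hq⟩ := walk_of_chain _ β l x hc (fun y hy => (hmem y).1 hy) ((hmem x).1 (by simp))
    refine ⟨_, _, q, ?_, ?_⟩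
    · rw [Walk.isPath_def]
      rw [← hq] at hn
      exact hn.of_map _
    · intro y
      have h := (hmem y).2 y.2
      rw [← hq] at h
      obtain ⟨z, hz, hzy⟩ := List.mem_map.1 h
      rwa [← Subtype.ext hzy]

lemma list_split {V : Type*} [DecidableEq V] (X : Set V) [DecidablePred (· ∈ X)] (B : ℕ) :
    ∀ l : List V, l.countP (· ∈ X) ≤ B →
    ∃ l', l' <:+: l ∧ (∀ x ∈ l', x ∉ X) ∧ l.length + 1 ≤ (B + 1) * (l'.length + 1) := by
  induction B with
  | zero =>
    intro l hl
    refine ⟨l, List.infix_rfl, ?_, by omega⟩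
    have : l.countP (· ∈ X) = 0 := by omega
    rw [List.countP_eq_zero] at this
    simpa using this
  | succ B ih =>
    intro l hl
    by_cases h : ∃ x ∈ l, x ∈ X
    · obtain ⟨x, hx, hxX⟩ := h
      -- split at the first element in `X`
      have hsplit : ∀ l : List V, (∃ x ∈ l, x ∈ X) → ∃ l1 x l2, l = l1 ++ x :: l2 ∧ x ∈ X ∧
          ∀ y ∈ l1, y ∉ X := by
        intro l
        induction l with
        | nil => simp
        | cons y l ih =>
          intro h
          by_cases hy : y ∈ X
          · exact ⟨[], y, l, rfl, hy, by simp⟩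
          · obtain ⟨l1, x, l2, rfl, h1, h2⟩ := ih (by
              obtain ⟨x, hx, hx'⟩ := h
              rcases List.mem_cons.1 hx with rfl | hx
              · exact absurd hx' hy
              · exact ⟨x, hx, hx'⟩)
            refine ⟨y :: l1, x, l2, rfl, h1, ?_⟩
            intro z hz
            rcases List.mem_cons.1 hz with rfl | hz
            · exact hy
            · exact h2 z hz
      obtain ⟨l1, x, l2, rfl, h1, h2⟩ := hsplit l ⟨x, hx, hxX⟩
      by_cases hlen : (l1 ++ x :: l2).length + 1 ≤ (B + 1 + 1) * (l1.length + 1)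
      · exact ⟨l1, (List.prefix_append _ _).isInfix, h2, hlen⟩
      · have hc : l2.countP (· ∈ X) ≤ B := by
          rw [List.countP_append, List.countP_cons] at hl
          simp [h1] at hl
          omega
        obtain ⟨l', hl', h3, h4⟩ := ih l2 hc
        refine ⟨l', hl'.trans ⟨l1 ++ [x], [], by simp⟩, h3, ?_⟩
        simp only [List.length_append, List.length_cons] at hlen ⊢
        push Not at hlen
        nlinarith
    · refine ⟨l, List.infix_rfl, fun x hx hxX => h ⟨x, hx, hxX⟩, ?_⟩
      nlinarith

lemma comb {V : Type*} [DecidableEq V] (K L : ℕ) (P : ℕ → Set V) (A : ℕ → Finset V)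
    (hmono : ∀ i j, i ≤ j → P j ⊆ P i) (hav : ∀ i j, 0 < i → i < j → j ≤ L → ∀ x ∈ P j, x ∉ A i)
    (hQ : ∀ i < L, ∃ Q : Finset V, Q.card ≤ K ∧ (∀ x ∈ Q, x ∈ P i) ∧
      ∀ s, i < s → s ≤ L → ∃ x ∈ Q, x ∈ A s) :
    ∀ (b i : ℕ) (S : Finset ℕ), (∀ s ∈ S, i < s ∧ s ≤ L) →
      (∀ s ∈ S, {x | x ∈ A s ∧ x ∈ P i}.ncard ≤ b) → S.card + 1 ≤ (2 * K + 1) ^ b := by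
  intro b
  induction b with
  | zero =>
    intro i S hS hb
    rcases S.eq_empty_or_nonempty with rfl | ⟨s, hs⟩
    · simp
    · exfalso
      obtain ⟨Q, -, hQP, hQA⟩ := hQ i (by have := hS s hs; omega)
      obtain ⟨x, hx, hxA⟩ := hQA s (hS s hs).1 (hS s hs).2
      have h0 := hb s hs
      have hfin : {x | x ∈ A s ∧ x ∈ P i}.Finite :=
        (A s).finite_toSet.subset (fun x hx => hx.1)
      rw [Nat.le_zero, Set.ncard_eq_zero hfin] at h0
      have : x ∈ ({x | x ∈ A s ∧ x ∈ P i} : Set V) := ⟨hxA, hQP x hx⟩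
      rw [h0] at this
      exact this
  | succ b ih =>
    intro i S hS hb
    rcases S.eq_empty_or_nonempty with rfl | ⟨s, hs⟩
    · simp only [Finset.card_empty]
      exact Nat.one_le_pow _ _ (by omega)
    obtain ⟨Q, hQK, hQP, hQA⟩ := hQ i (by have := hS s hs; omega)
    have hX : 1 ≤ (2 * K + 1) ^ b := Nat.one_le_pow _ _ (by omega)
    have hsub : S ⊆ Q.biUnion (fun x => S.filter (fun s => x ∈ A s)) := by
      intro s hs
      obtain ⟨x, hx, hxA⟩ := hQA s (hS s hs).1 (hS s hs).2
      simp only [Finset.mem_biUnion, Finset.mem_filter]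
      exact ⟨x, hx, hs, hxA⟩
    have hone : ∀ x ∈ Q, (S.filter (fun s => x ∈ A s)).card ≤ (2 * K + 1) ^ b + 1 := by
      intro x hx
      rcases (S.filter (fun s => x ∈ A s)).eq_empty_or_nonempty with h | h
      · rw [h]; simp
      set Sx := S.filter (fun s => x ∈ A s) with hSx
      set i' := Sx.min' h with hi'
      have hi'm : i' ∈ Sx := Sx.min'_mem h
      have hi'2 := Finset.mem_filter.1 hi'm
      set S' := Sx.filter (fun s => i' + 1 < s) with hS'
      have hcard : Sx.card ≤ S'.card + 2 := by
        have : Sx ⊆ insert i' (insert (i' + 1) S') := by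
          intro s hs
          have := Sx.min'_le s hs
          simp only [Finset.mem_insert, hS', Finset.mem_filter]
          by_cases h1 : s = i'
          · exact Or.inl h1
          by_cases h2 : s = i' + 1
          · exact Or.inr (Or.inl h2)
          · exact Or.inr (Or.inr ⟨hs, by omega⟩)
        refine (Finset.card_le_card this).trans ?_
        refine (Finset.card_insert_le _ _).trans ?_
        have := Finset.card_insert_le (i' + 1) S'
        omega
      have := ih (i' + 1) S' (by
        intro s hs
        have h1 := Finset.mem_filter.1 hs
        have h2 := Finset.mem_filter.1 h1.1
        exact ⟨h1.2, (hS s h2.1).2⟩) (by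
        intro s hs
        have h1 := Finset.mem_filter.1 hs
        have h2 := Finset.mem_filter.1 h1.1
        have hlt : {y | y ∈ A s ∧ y ∈ P (i' + 1)}.ncard < {y | y ∈ A s ∧ y ∈ P i}.ncard := by
          apply Set.ncard_lt_ncard _ ((A s).finite_toSet.subset (fun x hx => hx.1))
          rw [Set.ssubset_iff_of_subset]
          · refine ⟨x, ⟨h2.2, hQP x hx⟩, ?_⟩
            rintro ⟨-, hxP⟩
            have h3 := hS i' hi'2.1
            have h4 := hS s h2.1
            exact hav i' (i' + 1) (by omega) (by omega) (by omega) x hxP hi'2.2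
          · rintro y ⟨hy1, hy2⟩
            have h3 := hS i' hi'2.1
            exact ⟨hy1, hmono i (i' + 1) (by omega) hy2⟩
        have := hb s h2.1
        omega)
      omega
    have h1 := Finset.card_le_card hsub
    have h2 := Finset.card_biUnion_le_card_mul Q _ _ hone
    have h3 : Q.card * ((2 * K + 1) ^ b + 1) ≤ K * ((2 * K + 1) ^ b + 1) := Nat.mul_le_mul_right _ hQK
    rw [pow_succ]
    nlinarith

lemma avoid_of_dist {N : Type*} {T : SimpleGraph N} (hT : T.Connected) (r t x : N) (hne : x ≠ t)
    (hd : T.dist r x ≤ T.dist r t) : AvoidReach T t x r := by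
  classical
  obtain ⟨w, hw⟩ := hT.exists_walk_length_eq_dist x r
  refine ⟨w, fun ht => ?_⟩
  have h1 := congrArg Walk.length (w.take_spec ht)
  rw [Walk.length_append] at h1
  have h2 := SimpleGraph.dist_le (w.dropUntil t ht)
  rw [SimpleGraph.dist_comm] at h2 hw
  have h3 : (w.takeUntil t ht).length = 0 := by omega
  exact hne (Walk.eq_of_length_eq_zero h3)

lemma exists_parent {N : Type*} {T : SimpleGraph N} (hT : T.Connected) (r t : N) (hne : t ≠ r) :
    ∃ p, T.Adj t p ∧ T.dist r p < T.dist r t := by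
  obtain ⟨w, hw⟩ := hT.exists_walk_length_eq_dist t r
  cases w with
  | nil => exact absurd rfl hne
  | @cons _ p _ h q =>
    refine ⟨p, h, ?_⟩
    have h2 := SimpleGraph.dist_le q
    rw [SimpleGraph.dist_comm] at h2 hw
    rw [Walk.length_cons] at hw
    omega

lemma cross_model {N : Type*} {T : SimpleGraph N} (hT : T.IsAcyclic) {M : Set N}
    (hM : (T.induce M).Connected) {t p x y : N} (hp : T.Adj t p) (hx : x ∈ M) (hy : y ∈ M)
    (hxa : AvoidReach T t x p) (hyb : ¬ AvoidReach T t y p) : t ∈ M ∧ p ∈ M := by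
  have ht : t ∈ M := by
    by_contra ht
    exact hyb ((avoid_model hM ht hy hx).trans' hxa)
  have hne : x ≠ t := by
    rintro rfl
    obtain ⟨w, hw⟩ := hxa
    simp at hw
  obtain ⟨t', h1, h2, h3⟩ := first_step hM ht hx hne
  have := avoid_unique hT h1 hp (h3.trans' hxa)
  exact ⟨ht, this ▸ h2⟩

lemma walk_cross {V N : Type*} {G : SimpleGraph V} {T : SimpleGraph N} (hT : T.IsAcyclic)
    (R : TreeRep G T) {t p : N} (hp : T.Adj t p) {x y : V} (w : G.Walk x y) :
    ∀ a ∈ R.model x, ∀ b ∈ R.model y, AvoidReach T t a p → ¬ AvoidReach T t b p →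
    ∃ z ∈ w.support, t ∈ R.model z ∧ p ∈ R.model z := by
  induction w with
  | nil =>
    intro a ha b hb h1 h2
    exact ⟨_, by simp, cross_model hT (R.model_connected _) hp ha hb h1 h2⟩
  | @cons x x' y h w ih =>
    intro a ha b hb h1 h2
    obtain ⟨m, hm, hm'⟩ := R.adj_meet h
    by_cases hma : AvoidReach T t m p
    · obtain ⟨z, hz, hz'⟩ := ih m hm' b hb hma h2
      exact ⟨z, by simp [hz], hz'⟩
    · exact ⟨x, by simp, cross_model hT (R.model_connected _) hp ha hm h1 hma⟩

/-- The union of the models of the vertices of a list. -/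
def listModel {V N : Type*} {G : SimpleGraph V} {T : SimpleGraph N} (R : TreeRep G T)
    (l : List V) : Set N := {s | ∃ x ∈ l, s ∈ R.model x}

lemma listModel_connected {V N : Type*} {G : SimpleGraph V} {T : SimpleGraph N} (R : TreeRep G T)
    (l : List V) : ∀ x, (x :: l).IsChain G.Adj → (T.induce (listModel R (x :: l))).Connected := by
  induction l with
  | nil =>
    intro x _
    have : listModel R [x] = R.model x := by ext s; simp [listModel]
    rw [this]
    exact R.model_connected x
  | cons y l ih =>
    intro x hc
    rw [List.isChain_cons_cons] at hc
    have : listModel R (x :: y :: l) = R.model x ∪ listModel R (y :: l) := by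
      ext s; simp [listModel]
    rw [this]
    obtain ⟨m, hm, hm'⟩ := R.adj_meet hc.1
    exact SimpleGraph.induce_union_connected (R.model_connected x).preconnected
      (ih y hc.2).preconnected
      ⟨m, hm, ⟨y, by simp, hm'⟩⟩

lemma exists_top {V N : Type*} {G : SimpleGraph V} {T : SimpleGraph N} (R : TreeRep G T) (r : N)
    (l : List V) (hl : l ≠ []) :
    ∃ t ∈ listModel R l, ∀ s ∈ listModel R l, T.dist r t ≤ T.dist r s := by
  have hne : (listModel R l).Nonempty := by
    obtain ⟨x, hx⟩ := List.exists_mem_of_ne_nil l hl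
    obtain ⟨s, hs⟩ := (R.model_connected x).nonempty
    exact ⟨s, x, hx, hs⟩
  obtain ⟨t, ht, hmin⟩ := (wellFounded_lt (α := ℕ)).has_min ((T.dist r) '' listModel R l)
    (hne.image _)
  obtain ⟨t, ht', rfl⟩ := ht
  exact ⟨t, ht', fun s hs => not_lt.1 (hmin _ ⟨s, hs, rfl⟩)⟩

/-- A short set in a path meeting all walks. -/
lemma short_walk {V : Type*} (G : SimpleGraph V) (K : ℕ)
    (hK : ∀ m, Nonempty (pathGraph m ↪g G) → m ≤ K)
    (l : List V) (hc : l.IsChain G.Adj) (x y : V) (hx : x ∈ l) (hy : y ∈ l) :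
    ∃ w : G.Walk x y, w.length + 1 ≤ K ∧ ∀ z ∈ w.support, z ∈ l := by
  cases l with
  | nil => simp at hx
  | cons u l =>
    set β : Set V := {z | z ∈ u :: l} with hβ
    obtain ⟨v, p, hp⟩ := walk_of_chain G β l u hc (fun y hy => hy) (by simp [hβ])
    have hr : ∀ z (hz : z ∈ u :: l), (G.induce β).Reachable ⟨u, by simp [hβ]⟩ ⟨z, hz⟩ := by
      classical
      intro z hz
      have hz2 : z ∈ p.support.map Subtype.val := by rw [hp]; exact hz
      obtain ⟨z', hz', rfl⟩ := List.mem_map.1 hz2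
      exact (p.takeUntil z' hz').reachable
    obtain ⟨w, hw⟩ := ((hr x hx).symm.trans (hr y hy)).exists_walk_length_eq_dist
    obtain ⟨e⟩ := geod_embedding _ w hw
    refine ⟨w.map (Embedding.induce β).toHom, ?_, ?_⟩
    · refine le_of_eq_of_le (congrArg (· + 1) (Walk.length_map (Embedding.induce β).toHom w)) ?_
      exact hK _ ⟨e.trans (Embedding.induce β)⟩
    · intro z hz
      have hz' : z ∈ (w.map (Embedding.induce β).toHom).support := hz
      rw [Walk.support_map] at hz'
      obtain ⟨z', -, rfl⟩ := List.mem_map.1 hz'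
      exact z'.2

lemma main_bound {V N : Type*} [Finite V] (G : SimpleGraph V) (T : SimpleGraph N) (hT : T.IsTree)
    (R : TreeRep G T) (a B K : ℕ) (ha : 0 < a) (hB : ∀ t, (R.bag t).ncard ≤ B)
    (hadh : R.AdhesionLT a) (hK : ∀ m, Nonempty (pathGraph m ↪g G) → m ≤ K)
    (l0 : List V) (hc0 : l0.IsChain G.Adj) (hn0 : l0.Nodup) :
    l0.length < (B + 1) ^ ((2 * K + 1) ^ (a - 1)) := by
  classical
  by_contra hcon
  push Not at hcon
  set L := (2 * K + 1) ^ (a - 1) with hL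
  haveI : Nonempty N := hT.connected.nonempty
  obtain ⟨r⟩ := this
  -- top nodes
  have htop : ∀ l : List V, ∃ t, l ≠ [] → t ∈ listModel R l ∧
      ∀ s ∈ listModel R l, T.dist r t ≤ T.dist r s := by
    intro l
    by_cases hl : l = []
    · exact ⟨r, fun h => absurd hl h⟩
    · obtain ⟨t, h1, h2⟩ := exists_top R r l hl
      exact ⟨t, fun _ => ⟨h1, h2⟩⟩
  choose top htop using htop
  have hstep : ∀ l : List V, ∃ l', l' <:+: l ∧ (l.Nodup → (∀ x ∈ l', x ∉ R.bag (top l)) ∧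
      l.length + 1 ≤ (B + 1) * (l'.length + 1)) := by
    intro l
    by_cases hl : l.Nodup
    · have hcount : l.countP (· ∈ R.bag (top l)) ≤ B := by
        rw [List.countP_eq_length_filter]
        refine le_trans ?_ (hB (top l))
        have hnd : (l.filter (· ∈ R.bag (top l))).Nodup := hl.filter _
        rw [← List.toFinset_card_of_nodup hnd, ← Set.ncard_coe_finset]
        apply Set.ncard_le_ncard _ (Set.toFinite _)
        intro x hx
        simp at hx
        exact hx.2
      obtain ⟨l', h1, h2, h3⟩ := list_split (R.bag (top l)) B l hcount
      exact ⟨l', h1, fun _ => ⟨h2, h3⟩⟩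
    · exact ⟨l, List.infix_rfl, fun h => absurd h hl⟩
  choose step hst1 hst2 using hstep
  set P : ℕ → List V := fun i => step^[i] l0 with hP
  have hPs : ∀ i, P (i + 1) = step (P i) := fun i => Function.iterate_succ_apply' step i l0
  have hP0 : P 0 = l0 := rfl
  have hinf : ∀ i j, i ≤ j → P j <:+: P i := by
    intro i j hij
    induction hij with
    | refl => exact List.infix_rfl
    | step _ ih => exact (by rw [Nat.succ_eq_add_one, hPs]; exact (hst1 _).trans ih)
  have hchain : ∀ i, (P i).IsChain G.Adj := fun i => hc0.infix (hinf 0 i (Nat.zero_le _))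
  have hnod : ∀ i, (P i).Nodup := fun i => hn0.sublist (hinf 0 i (Nat.zero_le _)).sublist
  have hlen : ∀ i, l0.length + 1 ≤ (B + 1) ^ i * ((P i).length + 1) := by
    intro i
    induction i with
    | zero => simp [hP0]
    | succ i ih =>
      refine ih.trans ?_
      rw [pow_succ, mul_assoc, hPs]
      exact Nat.mul_le_mul_left _ (hst2 _ (hnod i)).2
  have hne : ∀ i ≤ L, P i ≠ [] := by
    intro i hi h
    have h1 := hlen i
    rw [h] at h1
    have h2 : (B + 1) ^ i ≤ (B + 1) ^ L := Nat.pow_le_pow_right (by omega) hi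
    simp at h1
    omega
  have hsubm : ∀ i j, i ≤ j → listModel R (P j) ⊆ listModel R (P i) := by
    rintro i j hij s ⟨x, hx, hs⟩
    exact ⟨x, (hinf i j hij).subset hx, hs⟩
  set t : ℕ → N := fun i => top (P i) with ht
  have htm : ∀ i ≤ L, t i ∈ listModel R (P i) := fun i hi => (htop _ (hne i hi)).1
  have hmin : ∀ i ≤ L, ∀ s ∈ listModel R (P i), T.dist r (t i) ≤ T.dist r s :=
    fun i hi => (htop _ (hne i hi)).2
  have havoid : ∀ i j, i < j → ∀ x ∈ P j, x ∉ R.bag (t i) := by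
    intro i j hij x hx
    have h1 := (hinf (i + 1) j hij).subset hx
    rw [hPs] at h1
    exact (hst2 _ (hnod i)).1 x h1
  have htne : ∀ i j, i < j → j ≤ L → t i ≠ t j := by
    intro i j hij hj h
    obtain ⟨x, hx, hxt⟩ := htm j hj
    exact havoid i j hij x hx (h ▸ hxt)
  have htd : ∀ i j, i < j → j ≤ L → T.dist r (t i) ≤ T.dist r (t j) := by
    intro i j hij hj
    exact hmin i (by omega) _ (hsubm i j hij.le (htm j hj))
  have hroot : ∀ s, 0 < s → s ≤ L → t s ≠ r := by
    intro s hs hsL h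
    have h1 := htd 0 s hs hsL
    rw [h, SimpleGraph.dist_self, Nat.le_zero, hT.connected.dist_eq_zero_iff] at h1
    exact htne 0 s hs hsL (h1.symm.trans h.symm)
  have hpar : ∀ s, ∃ p, 0 < s → s ≤ L → T.Adj (t s) p ∧ T.dist r p < T.dist r (t s) := by
    intro s
    by_cases h : 0 < s ∧ s ≤ L
    · obtain ⟨p, hp⟩ := exists_parent hT.connected r (t s) (hroot s h.1 h.2)
      exact ⟨p, fun _ _ => hp⟩
    · exact ⟨r, fun h1 h2 => absurd ⟨h1, h2⟩ h⟩
  choose p hp using hpar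
  have hup : ∀ i s, i < s → s ≤ L → AvoidReach T (t s) (t i) (p s) := by
    intro i s his hs
    have h1 := avoid_of_dist hT.connected r (t s) (t i) (htne i s his hs) (htd i s his hs)
    have h2 := hp s (by omega) hs
    exact h1.trans' (avoid_of_dist hT.connected r (t s) (p s) h2.1.ne' h2.2.le).symm'
  have hdown : ∀ s, 0 < s → s ≤ L → ¬ AvoidReach T (t s) (t L) (p s) := by
    intro s hs hsL h
    obtain ⟨h1, h2⟩ := hp s hs hsL
    have hconn : (T.induce (listModel R (P s))).Connected := by
      have hc := hchain s
      have hn := hne s hsL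
      generalize P s = l at hc hn
      cases l with
      | nil => exact absurd rfl hn
      | cons x l => exact listModel_connected R l x hc
    have hneq : t L ≠ t s := by
      intro h'
      rw [h'] at h
      obtain ⟨w, hw⟩ := h
      simp at hw
    obtain ⟨t', h3, h4, h5⟩ := first_step hconn (htm s hsL) (hsubm s L hsL (htm L le_rfl)) hneq
    have := avoid_unique hT.isAcyclic h3 h1 (h5.trans' h)
    subst this
    have := hmin s hsL _ h4
    omega
  have hfin : ∀ s, (R.bag (t s) ∩ R.bag (p s)).Finite := fun s => Set.toFinite _
  have := comb K L (fun i => {x | x ∈ P i}) (fun s => (hfin s).toFinset)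
    (fun i j hij x hx => (hinf i j hij).subset hx)
    (by
      intro i j _ hij hj x hx hxA
      rw [Set.Finite.mem_toFinset] at hxA
      exact havoid i j hij x hx hxA.1)
    (by
      intro i hi
      obtain ⟨x, hx, hxt⟩ := htm i hi.le
      obtain ⟨y, hy, hyt⟩ := htm L le_rfl
      obtain ⟨w, hw, hws⟩ := short_walk G K hK (P i) (hchain i) x y hx ((hinf i L hi.le).subset hy)
      refine ⟨w.support.toFinset, ?_, ?_, ?_⟩
      · refine (List.toFinset_card_le _).trans ?_
        rw [Walk.length_support]
        exact hw
      · intro z hz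
        exact hws z (by simpa using hz)
      · intro s his hsL
        obtain ⟨z, hz, hz1, hz2⟩ := walk_cross hT.isAcyclic R (hp s (by omega) hsL).1 w (t i) hxt
          (t L) hyt (hup i s his hsL) (hdown s (by omega) hsL)
        refine ⟨z, by simpa using hz, ?_⟩
        rw [Set.Finite.mem_toFinset]
        exact ⟨hz1, hz2⟩)
    (a - 1) 0 (Finset.Icc 1 L)
    (by intro s hs; rw [Finset.mem_Icc] at hs; omega)
    (by
      intro s hs
      rw [Finset.mem_Icc] at hs
      have h1 := hadh (hp s (by omega) hs.2).1
      have h2 : {x | x ∈ (hfin s).toFinset ∧ x ∈ ({x | x ∈ P 0} : Set V)}.ncard ≤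
          (R.bag (t s) ∩ R.bag (p s)).ncard := by
        apply Set.ncard_le_ncard _ (hfin s)
        rintro x ⟨hx, -⟩
        rwa [Set.Finite.mem_toFinset] at hx
      omega)
  rw [Nat.card_Icc] at this
  omega

lemma numeric (a n B K : ℕ) (ha : 0 < a) (c d : ℝ) (hc0 : 0 < c) (hc : c ≤ 1 / 3)
    (hd0 : 0 < d) (hB1 : 1 ≤ B) (hK1 : 1 ≤ K) (hn1 : 2 ≤ n)
    (hBK : c * Real.logb 2 B ^ d ≤ K)
    (hlt : n < (B + 1) ^ ((2 * K + 1) ^ (a - 1))) :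
    c * Real.logb 2 n ^ ((1 : ℝ) / (4 * (a : ℝ) + 1 / d)) ≤ K := by
  by_contra hcon
  push Not at hcon
  have ha1 : (1 : ℝ) ≤ a := by exact_mod_cast ha
  have hK1' : (1 : ℝ) ≤ K := by exact_mod_cast hK1
  have hB1' : (1 : ℝ) ≤ B := by exact_mod_cast hB1
  have hn1' : (2 : ℝ) ≤ n := by exact_mod_cast hn1
  have hE : 0 < 4 * (a : ℝ) + 1 / d := by positivity
  set E := 4 * (a : ℝ) + 1 / d with hEdef
  set ℓ := Real.logb 2 n with hℓ
  have hℓ0 : 0 ≤ ℓ := Real.logb_nonneg (by norm_num) (by linarith)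
  set x := ℓ ^ (1 / E) with hx
  have hx0 : 0 ≤ x := Real.rpow_nonneg hℓ0 _
  have hKx : 3 * (K : ℝ) < x := by nlinarith
  have hx1 : 3 < x := by linarith
  have hℓx : ℓ = x ^ E := by
    rw [hx, ← Real.rpow_mul hℓ0, one_div, inv_mul_cancel₀ hE.ne', Real.rpow_one]
  have hlB0 : 0 ≤ Real.logb 2 B := Real.logb_nonneg (by norm_num) hB1'
  have hlB : Real.logb 2 B ≤ x ^ (1 / d) := by
    have h1 : Real.logb 2 B ^ d ≤ x := by
      have : c * Real.logb 2 B ^ d ≤ c * x := by linarith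
      exact le_of_mul_le_mul_left this hc0
    have h2 := Real.rpow_le_rpow (Real.rpow_nonneg hlB0 d) h1 (by positivity : 0 ≤ 1 / d)
    rwa [← Real.rpow_mul hlB0, mul_one_div_cancel hd0.ne', Real.rpow_one] at h2
  have hx1d : 1 ≤ x ^ (1 / d) := Real.one_le_rpow (by linarith) (by positivity)
  have hlB1 : Real.logb 2 ((B : ℝ) + 1) ≤ 2 * x ^ (1 / d) := by
    have h1 : Real.logb 2 ((B : ℝ) + 1) ≤ Real.logb 2 (2 * B) :=
      Real.logb_le_logb_of_le (by norm_num) (by linarith) (by linarith)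
    rw [Real.logb_mul (by norm_num) (by linarith), Real.logb_self_eq_one (by norm_num)] at h1
    linarith
  have hℓ1 : ℓ ≤ ((2 * K + 1 : ℝ)) ^ (a - 1) * Real.logb 2 ((B : ℝ) + 1) := by
    have h1 : (n : ℝ) ≤ ((B : ℝ) + 1) ^ ((2 * K + 1) ^ (a - 1)) := by exact_mod_cast hlt.le
    have h2 := Real.logb_le_logb_of_le (b := 2) (by norm_num) (by linarith) h1
    rw [Real.logb_pow] at h2
    push_cast at h2
    exact h2
  have hpow : ((2 * K + 1 : ℝ)) ^ (a - 1) ≤ x ^ (a - 1) :=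
    pow_le_pow_left₀ (by positivity) (by linarith) _
  have hfinal : ℓ < x ^ E := by
    calc ℓ ≤ ((2 * K + 1 : ℝ)) ^ (a - 1) * Real.logb 2 ((B : ℝ) + 1) := hℓ1
      _ ≤ x ^ (a - 1) * (2 * x ^ (1 / d)) := by
          apply mul_le_mul hpow hlB1 _ (by positivity)
          exact Real.logb_nonneg (by norm_num) (by linarith)
      _ < x ^ (a - 1) * (x * x ^ (1 / d)) := by
          apply mul_lt_mul_of_pos_left _ (by positivity)
          apply mul_lt_mul_of_pos_right _ (by positivity)
          linarith
      _ = x ^ a * x ^ (1 / d) := by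
          rw [← mul_assoc, ← pow_succ, Nat.sub_add_cancel ha]
      _ = x ^ ((a : ℝ) + 1 / d) := by
          rw [Real.rpow_add (by linarith), Real.rpow_natCast]
      _ ≤ x ^ E := Real.rpow_le_rpow_of_exponent_le (by linarith) (by rw [hEdef]; linarith)
  linarith

theorem stmt18 (a : ℕ) (ha : 0 < a) (c d : ℝ) (hc0 : 0 < c) (hc : c ≤ 1 / 3)
    (hd0 : 0 < d) (hd : d ≤ 1)
    (𝒢 : ∀ {W : Type}, SimpleGraph W → Prop)
    (hsub : ∀ {W W' : Type} (G : SimpleGraph W) (H : SimpleGraph W'),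
      𝒢 G → (∃ f : W' ↪ W, ∀ u v : W', H.Adj u v → G.Adj (f u) (f v)) → 𝒢 H)
    (hbound : ∀ {W : Type} [Fintype W] (H : SimpleGraph W) (n : ℕ), 𝒢 H → HasHamPath H →
      Fintype.card W = n → HasInducedPathGE H (c * Real.logb 2 n ^ d))
    {V : Type} [Fintype V] (G : SimpleGraph V) (n : ℕ)
    (hG : ∃ (N : Type) (_ : Fintype N) (T : SimpleGraph N) (_ : T.IsTree) (R : TreeRep G T),
      R.AdhesionLT a ∧ ∀ t, 𝒢 (R.torso t))
    (hham : HasHamPath G) (hn : Fintype.card V = n) :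
    HasInducedPathGE G (c * Real.logb 2 n ^ ((1 : ℝ) / (4 * (a : ℝ) + 1 / d))) := by
  classical
  obtain ⟨N, _, T, hT, R, hadh, htor⟩ := hG
  -- the maximum order of an induced path
  have hbdd : ∀ m, Nonempty (pathGraph m ↪g G) → m ≤ Fintype.card V := by
    rintro m ⟨e⟩
    simpa using Fintype.card_le_of_injective e e.injective
  have hex : ∃ m, Nonempty (pathGraph m ↪g G) :=
    ⟨0, ⟨⟨⟨fun i => i.elim0, fun i => i.elim0⟩, fun {i} => i.elim0⟩⟩⟩
  obtain ⟨K, hKe, hK⟩ : ∃ K, Nonempty (pathGraph K ↪g G) ∧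
      ∀ m, Nonempty (pathGraph m ↪g G) → m ≤ K := by
    obtain ⟨m0, hm0⟩ := hex
    exact ⟨Nat.findGreatest (fun m => Nonempty (pathGraph m ↪g G)) (Fintype.card V),
      Nat.findGreatest_spec (P := fun m => Nonempty (pathGraph m ↪g G)) (hbdd m0 hm0) hm0,
      fun m hm => Nat.le_findGreatest (hbdd m hm) hm⟩
  refine ⟨K, ?_, hKe⟩
  have hham' := hham
  obtain ⟨u, v, p, hp, hall⟩ := hham
  have hlen : p.support.length = n := by
    rw [← hn, ← List.toFinset_card_of_nodup hp.support_nodup, ← Finset.card_univ]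
    congr 1
    ext w
    simp [hall]
  have hK1 : 1 ≤ K := by
    obtain ⟨e⟩ := geod_embedding G (Walk.nil : G.Walk u u) (by simp)
    exact hK 1 ⟨e⟩
  have hE : 0 < 4 * (a : ℝ) + 1 / d := by positivity
  rcases Nat.lt_or_ge n 2 with hn2 | hn2
  · have h0 : Real.logb 2 n = 0 := by
      interval_cases n <;> simp
    rw [h0, Real.zero_rpow (by positivity), mul_zero]
    positivity
  -- every bag is small
  have hbag : ∀ t, (R.bag t).Nonempty → c * Real.logb 2 (R.bag t).ncard ^ d ≤ K := by
    intro t ht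
    have hG' : 𝒢 ((thruGraph G (R.bag t)).induce (R.bag t)) :=
      hsub (R.torso t) _ (htor t) ⟨Function.Embedding.refl _, fun x y h =>
        thru_le_torso hT.isAcyclic R t x y h⟩
    obtain ⟨m, hm, ⟨e⟩⟩ := hbound _ (R.bag t).ncard hG' (thru_ham G _ ht hham')
      (by rw [← Nat.card_eq_fintype_card]; rfl)
    obtain ⟨m', hm', he'⟩ := thru_path G (R.bag t) m e
    refine hm.trans ?_
    exact_mod_cast hm'.trans (hK m' he')
  haveI : Nonempty N := hT.connected.nonempty
  obtain ⟨t0, ht0⟩ := Finite.exists_max (fun t => (R.bag t).ncard)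
  have hB1 : 1 ≤ (R.bag t0).ncard := by
    obtain ⟨s, hs⟩ := (R.model_connected u).nonempty
    have : 0 < (R.bag s).ncard := (Set.ncard_pos (Set.toFinite _)).2 ⟨u, hs⟩
    have := ht0 s
    omega
  have hb := main_bound G T hT R a (R.bag t0).ncard K ha ht0 hadh hK p.support
    p.isChain_adj_support hp.support_nodup
  rw [hlen] at hb
  exact numeric a n (R.bag t0).ncard K ha c d hc0 hc hd0 hB1 hK1 hn2
    (hbag t0 ((Set.ncard_pos (Set.toFinite _)).1 hB1)) hb
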